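/- Let D'_1 have the first marginal of the distribution f'_2 under a power-law layer type distribution; equivalently D'_1 is a mixed binomial random variable, Bin(X'−2, q(X'))-distributed given X', where P(X' = x) = (x)_2 q(x) p(x)/P_{21}. Then as t → ∞, P(D'_1 = t) = (c' + o(1)) t^{−(α−2)/(1−β)}, where c' = a b^{(α−2)/(1−β)} (1−β)^{−1} P_{21}^{−1}. -/

import Mathlib

open MeasureTheory ProbabilityTheory Filter
open scoped ENNReal Topology Classical

noncomputable section

/-- The binomial probability mass function `Bin(x,y)(s)`. -/
def binP (x : ℕ) (y : ℝ) (s : ℕ) : ℝ := (x.choose s : ℝ) * y ^ s * (1 - y) ^ (x - s)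

/-- Convolution of (mass) functions on `ℕ`. -/
def conv (f g : ℕ → ℝ) (s : ℕ) : ℝ := ∑ i ∈ Finset.range (s + 1), f i * g (s - i)

/-- Iterated convolution power: `convPow f j` is the `j`-fold convolution of `f`. -/
def convPow (f : ℕ → ℝ) : ℕ → ℕ → ℝ
  | 0 => fun s => if s = 0 then 1 else 0
  | j + 1 => conv f (convPow f j)

/-- The compound Poisson probability mass function `CPoi(lam, f)`, i.e. the law of
`H_1 + ⋯ + H_Λ` where `Λ ~ Poi(lam)` and the `H_k` are i.i.d. with mass function `f`,
independent of `Λ`. -/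
def cpoi (lam : ℝ) (f : ℕ → ℝ) (s : ℕ) : ℝ :=
  ∑' j : ℕ, Real.exp (-lam) * lam ^ j / (j.factorial : ℝ) * convPow f j s

/-- Convolution of (mass) functions on `ℕ × ℕ`. -/
def conv2 (F G : ℕ → ℕ → ℝ) (s t : ℕ) : ℝ :=
  ∑ i ∈ Finset.range (s + 1), ∑ j ∈ Finset.range (t + 1), F i j * G (s - i) (t - j)

/-- Point mass at `(1,1)`, as a mass function on `ℕ × ℕ`. -/
def delta11 (s t : ℕ) : ℝ := if s = 1 ∧ t = 1 then 1 else 0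

/-- The cross moment `P_{rs} = E[(X)_r Y^s]` for the layer type distribution
`P(dx,dy) = p(dx) δ_{q(x)}(dy)`. -/
def mom (p q : ℕ → ℝ) (r s : ℕ) : ℝ :=
  ∑' x : ℕ, (x.descFactorial r : ℝ) * q x ^ s * p x

/-- The increment distribution `g(s) = ∫ Bin(x-1,y)(s) x P(dx,dy) / P₁₀` for
`P(dx,dy) = p(dx) δ_{q(x)}(dy)`. -/
def gInc (p q : ℕ → ℝ) (s : ℕ) : ℝ :=
  (∑' x : ℕ, (x : ℝ) * binP (x - 1) (q x) s * p x) / mom p q 1 0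

/-- The limiting degree distribution `\bar f₁ = CPoi(μ P₁₀, g)`. -/
def barf1 (mu : ℝ) (p q : ℕ → ℝ) (s : ℕ) : ℝ :=
  cpoi (mu * mom p q 1 0) (gInc p q) s

/-- The distribution `f₂'` of `(D₁', D₂')`:
`f₂'(s,t) = ∫ Bin(x-2,y)(s) Bin(x-2,y)(t) (x)₂ y P(dx,dy) / P₂₁` for
`P(dx,dy) = p(dx) δ_{q(x)}(dy)`. -/
def f2p (p q : ℕ → ℝ) (s t : ℕ) : ℝ :=
  (∑' x : ℕ, (x.descFactorial 2 : ℝ) * q x * binP (x - 2) (q x) s * binP (x - 2) (q x) t * p x) /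
    mom p q 2 1

/-- The limiting bidegree distribution `\bar f₂ = δ₍₁,₁₎ ∗ (\bar f₁ ⊗ \bar f₁) ∗ f₂'`,
i.e. the joint law of `(D₁*, D₂*) = (1 + D₁ + D₁', 1 + D₂ + D₂')` where `D₁`, `D₂`,
`(D₁', D₂')` are mutually independent, `D₁, D₂ ~ \bar f₁` and `(D₁', D₂') ~ f₂'`. -/
def barf2 (mu : ℝ) (p q : ℕ → ℝ) : ℕ → ℕ → ℝ :=
  conv2 (conv2 delta11 fun s t => barf1 mu p q s * barf1 mu p q t) (f2p p q)

/-- `δ_t = t^{1/2} ln⁴(2+t)`. -/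
def deltaFn (t : ℕ) : ℝ := Real.sqrt t * Real.log (2 + (t : ℝ)) ^ (4 : ℕ)


lemma binP_eq (n : ℕ) (y : ℝ) (t : ℕ) : binP n y t = (bernsteinPolynomial ℝ n t).eval y := by
  simp [binP, bernsteinPolynomial]

def tl (n : ℕ) (y : ℝ) (t : ℕ) : ℝ := ∑ k ∈ Finset.range (t + 1), binP n y k

lemma binP_nonneg {n : ℕ} {y : ℝ} {t : ℕ} (h0 : 0 ≤ y) (h1 : y ≤ 1) : 0 ≤ binP n y t := by
  unfold binP
  have : 0 ≤ 1 - y := by linarith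
  positivity

lemma binP_succ (n : ℕ) (y : ℝ) (k : ℕ) :
    binP (n + 1) y (k + 1) = y * binP n y k + (1 - y) * binP n y (k + 1) := by
  unfold binP
  rw [Nat.choose_succ_succ, Nat.add_sub_add_right]
  push_cast
  rcases lt_or_ge k n with h | h
  · obtain ⟨m, rfl⟩ : ∃ m, n = k + 1 + m := ⟨n - (k + 1), by omega⟩
    have e1 : k + 1 + m - k = m + 1 := by omega
    have e2 : k + 1 + m - (k + 1) = m := by omega
    rw [e1, e2]; ring
  · rw [Nat.choose_eq_zero_of_lt (show n < k + 1 by omega)]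
    push_cast; ring

lemma tl_succ (n : ℕ) (y : ℝ) (t : ℕ) : tl (n + 1) y t = tl n y t - y * binP n y t := by
  induction t with
  | zero => simp [tl, binP]; ring
  | succ t ih =>
    unfold tl at *
    rw [Finset.sum_range_succ, ih, Finset.sum_range_succ _ (t + 1), binP_succ]; ring

lemma tl_deriv (n : ℕ) (y : ℝ) (t : ℕ) :
    HasDerivAt (fun y => tl (n + 1) y t) (-((n + 1 : ℕ) * binP n y t)) y := by
  induction t with
  | zero =>
    simp only [tl, binP_eq]
    simp only [zero_add, Finset.sum_range_one]
    have := (bernsteinPolynomial ℝ (n+1) 0).hasDerivAt y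
    rw [bernsteinPolynomial.derivative_zero] at this
    refine this.congr_deriv ?_
    simp; ring
  | succ t ih =>
    have e : (fun y => tl (n + 1) y (t + 1)) = fun y => tl (n + 1) y t + binP (n + 1) y (t + 1) := by
      funext y; simp [tl, Finset.sum_range_succ]
    rw [e]
    have := (bernsteinPolynomial ℝ (n+1) (t+1)).hasDerivAt y
    rw [bernsteinPolynomial.derivative_succ] at this
    have e2 : (fun y => binP (n + 1) y (t + 1)) =
        fun y => (bernsteinPolynomial ℝ (n+1) (t+1)).eval y := by
      funext y; exact binP_eq _ _ _
    rw [← e2] at this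
    refine (ih.add this).congr_deriv ?_
    simp [← binP_eq]; ring

lemma binP_zero_of_lt {n t : ℕ} (y : ℝ) (h : n < t) : binP n y t = 0 := by
  simp [binP, Nat.choose_eq_zero_of_lt h]

lemma hasSum_binP (n : ℕ) (y : ℝ) (s : ℝ) :
    HasSum (fun k => binP n y k * s ^ k) ((1 + y * (s - 1)) ^ n) := by
  have : (1 + y * (s - 1)) ^ n = ∑ k ∈ Finset.range (n + 1), binP n y k * s ^ k := by
    have : 1 + y * (s - 1) = y * s + (1 - y) := by ring
    rw [this, add_pow]
    refine Finset.sum_congr rfl fun k _ => ?_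
    simp only [binP, mul_pow]; ring
  rw [this]
  apply hasSum_sum_of_ne_finset_zero
  intro k hk
  rw [binP_zero_of_lt]; · simp
  simpa using hk

lemma hasSum_binP_one (n : ℕ) (y : ℝ) : HasSum (fun k => binP n y k) 1 := by
  simpa using hasSum_binP n y 1

lemma pow_bd {s : ℝ} (hs : 0 < s) (t : ℕ) : Real.exp (t * ((s - 1) / s)) ≤ s ^ t := by
  have : (s - 1) / s ≤ Real.log s := by
    have := Real.one_sub_inv_le_log_of_pos hs
    rwa [sub_div, div_self hs.ne', one_div]
  calc _ ≤ Real.exp (t * Real.log s) := by gcongr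
    _ = _ := by rw [mul_comm, Real.exp_mul, Real.exp_log hs, Real.rpow_natCast]

lemma mgf_bd (n : ℕ) {y s : ℝ} (h0 : 0 ≤ y) (h1 : y ≤ 1) (hs : 0 < s) :
    (1 + y * (s - 1)) ^ n ≤ Real.exp (n * y * (s - 1)) := by
  have : 1 + y * (s - 1) ≤ Real.exp (y * (s - 1)) := by linarith [Real.add_one_le_exp (y * (s - 1))]
  calc _ ≤ (Real.exp (y * (s - 1))) ^ n := by
        gcongr
        nlinarith
    _ = _ := by rw [← Real.exp_nat_mul]; ring_nf

lemma cher_aux {n t : ℕ} {y s A : ℝ} (h0 : 0 ≤ y) (h1 : y ≤ 1) (hs : 0 < s) (hA : 0 ≤ A)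
    (h : A * s ^ t ≤ (1 + y * (s - 1)) ^ n) : A ≤ Real.exp ((s - 1) * (n * y - t / s)) := by
  have h2 : A * Real.exp (t * ((s - 1) / s)) ≤ Real.exp (n * y * (s - 1)) :=
    (mul_le_mul_of_nonneg_left (pow_bd hs t) hA).trans (h.trans (mgf_bd n h0 h1 hs))
  rw [← le_div_iff₀ (Real.exp_pos _), ← Real.exp_sub] at h2
  refine h2.trans_eq ?_
  congr 1; ring

lemma cher_pmf {n t : ℕ} {y s : ℝ} (h0 : 0 ≤ y) (h1 : y ≤ 1) (hs : 0 < s) :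
    binP n y t ≤ Real.exp ((s - 1) * (n * y - t / s)) := by
  refine cher_aux h0 h1 hs (binP_nonneg h0 h1) ?_
  exact le_hasSum (hasSum_binP n y s) t fun k _ => mul_nonneg (binP_nonneg h0 h1) (by positivity)

lemma tl_nonneg {n t : ℕ} {y : ℝ} (h0 : 0 ≤ y) (h1 : y ≤ 1) : 0 ≤ tl n y t :=
  Finset.sum_nonneg fun _ _ => binP_nonneg h0 h1

lemma tl_le_one {n t : ℕ} {y : ℝ} (h0 : 0 ≤ y) (h1 : y ≤ 1) : tl n y t ≤ 1 :=
  sum_le_hasSum _ (fun _ _ => binP_nonneg h0 h1) (hasSum_binP_one n y)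

lemma cher_lo {n t : ℕ} {y s : ℝ} (h0 : 0 ≤ y) (h1 : y ≤ 1) (hs : 0 < s) (hs1 : s ≤ 1) :
    tl n y t ≤ Real.exp ((s - 1) * (n * y - t / s)) := by
  refine cher_aux h0 h1 hs (tl_nonneg h0 h1) ?_
  have := sum_le_hasSum (Finset.range (t + 1)) (fun k _ => mul_nonneg (binP_nonneg h0 h1)
    (by positivity)) (hasSum_binP n y s)
  refine le_trans ?_ this
  rw [tl, Finset.sum_mul]
  refine Finset.sum_le_sum fun k hk => ?_
  exact mul_le_mul_of_nonneg_left (pow_le_pow_of_le_one hs.le hs1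
    (by have := Finset.mem_range.1 hk; omega)) (binP_nonneg h0 h1)

lemma cher_hi {n t : ℕ} {y s : ℝ} (h0 : 0 ≤ y) (h1 : y ≤ 1) (hs1 : 1 ≤ s) :
    1 - tl n y t ≤ Real.exp ((s - 1) * (n * y - t / s)) := by
  have hs : 0 < s := by linarith
  refine cher_aux h0 h1 hs (by linarith [tl_le_one (n := n) (t := t) h0 h1]) ?_
  have a1 : (1 - tl n y t) * s ^ t = ∑' k, (if k < t + 1 then 0 else binP n y k * s ^ t) := by
    have : 1 - tl n y t = ∑' k, binP n y (k + (t + 1)) := by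
      have := (hasSum_binP_one n y).summable.sum_add_tsum_nat_add (t + 1)
      rw [(hasSum_binP_one n y).tsum_eq] at this
      unfold tl; linarith
    rw [this, ← tsum_mul_right]
    have hsm : Summable (fun k => (if k < t + 1 then 0 else binP n y k * s ^ t)) := by
      apply summable_of_ne_finset_zero (s := Finset.range (n + 1))
      intro k hk
      rw [binP_zero_of_lt]; · simp
      simpa using hk
    rw [← hsm.sum_add_tsum_nat_add (t + 1)]
    rw [Finset.sum_eq_zero]
    · rw [zero_add]
      refine tsum_congr fun k => ?_
      rw [if_neg (by omega)]
    · intro k hk; simp at hk; simp; intro h; omega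
  rw [a1]
  refine tsum_le_of_sum_le' (by have : 0 ≤ 1 + y * (s-1) := by nlinarith
                                positivity) fun F => ?_
  refine le_trans ?_ (sum_le_hasSum F (fun k _ => mul_nonneg (binP_nonneg h0 h1)
    (by positivity)) (hasSum_binP n y s))
  refine Finset.sum_le_sum fun k hk => ?_
  split_ifs with h
  · exact mul_nonneg (binP_nonneg h0 h1) (by positivity)
  · exact mul_le_mul_of_nonneg_left (pow_le_pow_right₀ hs1 (by omega)) (binP_nonneg h0 h1)

lemma binP_ratio_hi {n t : ℕ} {y z : ℝ} (h0 : 0 ≤ z) (hzy : z ≤ y) (h1 : y < 1) :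
    binP n z t ≤ binP n y t * Real.exp (n * (y - z) / (1 - y)) := by
  have e : (1 - z) ^ (n - t) ≤ (1 - y) ^ (n - t) * Real.exp (n * (y - z) / (1 - y)) := by
    have hy : 0 < 1 - y := by linarith
    have h2 : 1 - z ≤ (1 - y) * Real.exp ((y - z) / (1 - y)) := by
      have := Real.add_one_le_exp ((y - z) / (1 - y))
      calc 1 - z = (1 - y) * ((y - z) / (1 - y) + 1) := by field_simp; ring
        _ ≤ _ := by gcongr
    calc _ ≤ ((1 - y) * Real.exp ((y - z) / (1 - y))) ^ (n - t) := by
          gcongr; linarith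
      _ = (1 - y) ^ (n - t) * Real.exp ((n - t : ℕ) * ((y - z) / (1 - y))) := by
          rw [mul_pow, ← Real.exp_nat_mul]
      _ ≤ _ := by
          have : 0 ≤ (y - z) / (1 - y) := div_nonneg (by linarith) hy.le
          rw [mul_div_assoc]
          gcongr
          omega
  unfold binP
  calc _ ≤ (n.choose t : ℝ) * y ^ t * ((1 - y) ^ (n - t) * Real.exp (n * (y - z) / (1 - y))) := by
        have : 0 ≤ 1 - z := by linarith
        have : 0 ≤ y := by linarith
        gcongr
    _ = _ := by ring

lemma binP_ratio_lo {n t : ℕ} {y z r : ℝ} (h0 : 0 < y) (hz0 : 0 ≤ z) (hzy : z ≤ y) (h1 : y < 1)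
    (hr : r ≤ 1 - t * ((y - z) / y)) :
    binP n y t * r ≤ binP n z t := by
  have h2 : 1 - t * ((y - z) / y) ≤ (z / y) ^ t := by
    have hq : -2 ≤ -((y - z) / y) := by
      rw [neg_le_neg_iff, div_le_iff₀ h0]; linarith
    have := one_add_mul_le_pow hq t
    have e : 1 + -((y - z) / y) = z / y := by field_simp; ring
    rw [e] at this; linarith
  have h3 : binP n y t * r ≤ binP n y t * (z / y) ^ t :=
    mul_le_mul_of_nonneg_left (hr.trans h2) (binP_nonneg h0.le h1.le)
  refine h3.trans ?_
  unfold binP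
  calc _ = (n.choose t : ℝ) * z ^ t * (1 - y) ^ (n - t) := by
        rw [div_pow]; field_simp
    _ ≤ _ := by
        have : 0 ≤ 1 - y := by linarith
        gcongr

lemma ratio_lim (β : ℝ) :
    Tendsto (fun x : ℕ => (x : ℝ) * (1 - (1 + (x : ℝ)⁻¹) ^ (-β))) atTop (𝓝 β) := by
  have h : HasDerivAt (fun u : ℝ => u ^ (-β)) (-β) 1 := by
    simpa using Real.hasDerivAt_rpow_const (x := 1) (p := -β) (Or.inl one_ne_zero)
  have h2 := h.tendsto_slope_zero
  have h3 : Tendsto (fun x : ℕ => (x : ℝ)⁻¹) atTop (𝓝[≠] 0) := by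
    refine tendsto_nhdsWithin_iff.2 ⟨tendsto_inv_atTop_nhds_zero_nat, ?_⟩
    filter_upwards [eventually_gt_atTop 0] with x hx
    simp; omega
  have h4 := (h2.comp h3).neg
  simp only [neg_neg] at h4
  refine h4.congr fun x => ?_
  simp; ring

lemma q_facts {b β : ℝ} (hb : 0 < b) (hβ0 : 0 ≤ β) (hb1 : β = 0 → b < 1)
    {q : ℕ → ℝ} (hq : ∀ x : ℕ, q x = min 1 (b * (x : ℝ) ^ (-β))) :
    (∀ᶠ x : ℕ in atTop, q x = b * (x : ℝ) ^ (-β) ∧ 0 < q x ∧ q x < 1) ∧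
    ∃ l, l < 1 ∧ β * l = 0 ∧ Tendsto q atTop (𝓝 l) := by
  have key : ∃ l, l < 1 ∧ β * l = 0 ∧ Tendsto (fun x : ℕ => b * (x : ℝ) ^ (-β)) atTop (𝓝 l) := by
    rcases hβ0.eq_or_lt with h | h
    · refine ⟨b, hb1 h.symm, by simp [← h], ?_⟩
      simp [← h]
    · refine ⟨0, one_pos, by simp, ?_⟩
      have := ((tendsto_rpow_neg_atTop h).comp tendsto_natCast_atTop_atTop).const_mul b
      simpa using this
  obtain ⟨l, h1, h2, h3⟩ := key
  have ev : ∀ᶠ x : ℕ in atTop, q x = b * (x : ℝ) ^ (-β) ∧ 0 < q x ∧ q x < 1 := by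
    filter_upwards [h3.eventually (gt_mem_nhds h1), eventually_gt_atTop 0] with x hx hx0
    have e : q x = b * (x : ℝ) ^ (-β) := by rw [hq, min_eq_right hx.le]
    refine ⟨e, ?_, by rwa [e]⟩
    rw [e]; have : (0:ℝ) < x := by exact_mod_cast hx0
    positivity
  exact ⟨ev, l, h1, h2, h3.congr' (ev.mono fun x hx => hx.1.symm)⟩

lemma tl_mvt (n t : ℕ) {y z : ℝ} (h : z ≤ y) : ∃ u, z ≤ u ∧ u ≤ y ∧
    tl (n + 1) y t - tl (n + 1) z t = -((n + 1 : ℕ) * binP n u t) * (y - z) := by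
  rcases h.eq_or_lt with h | h
  · exact ⟨y, h.le, le_rfl, by simp [h]⟩
  · obtain ⟨u, hu, h2⟩ := exists_hasDerivAt_eq_slope (fun y => tl (n + 1) y t)
      (fun y => -((n + 1 : ℕ) * binP n y t)) h
      (fun u _ => (tl_deriv n u t).continuousAt.continuousWithinAt) (fun u _ => tl_deriv n u t)
    refine ⟨u, hu.1.le, hu.2.le, ?_⟩
    have : y - z ≠ 0 := by linarith
    rw [h2]; field_simp

lemma incr {b β : ℝ} (hb : 0 < b) (hβ0 : 0 ≤ β) (hb1 : β = 0 → b < 1)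
    {q : ℕ → ℝ} (hq : ∀ x : ℕ, q x = min 1 (b * (x : ℝ) ^ (-β))) {C ε : ℝ} (hε : 0 < ε) :
    ∀ᶠ x : ℕ in atTop, ∀ t : ℕ, (t : ℝ) ≤ C * (b * (x : ℝ) ^ (1 - β)) →
      |tl (x - 2) (q x) t - tl (x + 1 - 2) (q (x + 1)) t
        - (1 - β) * (q x * binP (x - 2) (q x) t)| ≤ ε * (q x * binP (x - 2) (q x) t) := by
  obtain ⟨ev, l, hl1, hl2, hl⟩ := q_facts hb hβ0 hb1 hq
  set D : ℕ → ℝ := fun x => x * ((q x - q (x + 1)) / q x) with hD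
  have hDlim : Tendsto D atTop (𝓝 β) := by
    refine (ratio_lim β).congr' ?_
    filter_upwards [ev, (tendsto_add_atTop_nat 1).eventually ev, eventually_gt_atTop 0]
      with x h1 h2 hx0
    have hx : (0:ℝ) < x := by exact_mod_cast hx0
    simp only [hD]
    rw [h1.1, h2.1]
    have : (1 + (x : ℝ)⁻¹) = ((x + 1 : ℕ) : ℝ) / x := by push_cast; field_simp
    rw [this, Real.div_rpow (by positivity) hx.le]
    have : (x:ℝ) ^ (-β) ≠ 0 := (Real.rpow_pos_of_pos hx _).ne'
    field_simp
  have hxinv : Tendsto (fun x : ℕ => (x : ℝ)⁻¹) atTop (𝓝 0) := tendsto_inv_atTop_nhds_zero_nat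
  have hρ : Tendsto (fun x => D x * (1 - (x : ℝ)⁻¹)) atTop (𝓝 β) := by
    simpa using hDlim.mul (hxinv.const_sub 1)
  have he : Tendsto (fun x : ℕ => D x * (1 - (x : ℝ)⁻¹) *
      Real.exp ((1 - 2 * (x : ℝ)⁻¹) * (D x * q x) / (1 - q x))) atTop (𝓝 β) := by
    have h1 : Tendsto (fun x => 1 - q x) atTop (𝓝 (1 - l)) := hl.const_sub 1
    have := hρ.mul (((((hxinv.const_mul 2).const_sub 1).mul (hDlim.mul hl)).div h1
      (by linarith)).rexp)
    simpa [hl2] using this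
  have hlo : Tendsto (fun x : ℕ => D x * (1 - (x : ℝ)⁻¹) * (1 - C * (D x * q x))) atTop (𝓝 β) := by
    have := hρ.mul (((hDlim.mul hl).const_mul C).const_sub 1)
    simpa [hl2] using this
  filter_upwards [ev, (tendsto_add_atTop_nat 1).eventually ev, eventually_ge_atTop 2,
    he.eventually (gt_mem_nhds (show β < β + ε by linarith)),
    hlo.eventually (lt_mem_nhds (show β - ε < β by linarith))] with x h1 h2 hx2 h3 h4 t ht
  obtain ⟨n, rfl⟩ : ∃ n, x = n + 2 := ⟨x - 2, by omega⟩
  have e1 : n + 2 - 2 = n := rfl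
  have e2 : n + 2 + 1 - 2 = n + 1 := rfl
  rw [e1, e2]
  set y := q (n + 2) with hy
  set z := q (n + 2 + 1) with hz
  set X : ℝ := ((n + 2 : ℕ) : ℝ) with hX
  have hXp : 0 < X := by simp only [hX]; positivity
  have hnX : (n : ℝ) = X - 2 := by simp [hX]
  have hzy : z ≤ y := by
    rw [h1.1, h2.1]
    have : (X:ℝ) ≤ ((n + 2 + 1 : ℕ) : ℝ) := by simp [hX]
    exact mul_le_mul_of_nonneg_left (Real.rpow_le_rpow_of_nonpos hXp this (by linarith)) hb.le
  have hy0 : 0 < y := h1.2.1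
  have hy1 : y < 1 := h1.2.2
  have hz0 : 0 < z := h2.2.1
  obtain ⟨u, hu1, hu2, hu⟩ := tl_mvt n t hzy
  have hpi : 0 ≤ binP n y t := binP_nonneg hy0.le hy1.le
  have hDn : D (n + 2) = X * ((y - z) / y) := rfl
  have hD0 : 0 ≤ (y - z) / y := div_nonneg (by linarith) hy0.le
  have r1 : binP n u t ≤ binP n y t *
      Real.exp ((1 - 2 * X⁻¹) * (D (n + 2) * y) / (1 - y)) := by
    refine (binP_ratio_hi (hz0.le.trans hu1) hu2 hy1).trans ?_
    have e : (1 - 2 * X⁻¹) * (D (n + 2) * y) = n * (y - z) := by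
      rw [hDn, hnX]; field_simp
    rw [e]
    have : 0 < 1 - y := by linarith
    gcongr
  have r2 : binP n y t * (1 - C * (D (n + 2) * y)) ≤ binP n u t := by
    refine binP_ratio_lo hy0 (hz0.le.trans hu1) hu2 hy1 ?_
    have a1 : (y - u) / y ≤ (y - z) / y := by gcongr
    have a2 : (t : ℝ) * ((y - u) / y) ≤ C * (b * X ^ (1 - β)) * ((y - z) / y) :=
      (mul_le_mul_of_nonneg_left a1 (by positivity)).trans (mul_le_mul_of_nonneg_right ht hD0)
    have a3 : b * X ^ (1 - β) = X * y := by
      rw [h1.1, sub_eq_add_neg, Real.rpow_add hXp, Real.rpow_one]; ring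
    rw [a3] at a2
    rw [hDn]; linarith
  have R : ((n + 1 : ℕ) : ℝ) * (y - z) = y * (D (n + 2) * (1 - X⁻¹)) := by
    have : ((n + 1 : ℕ) : ℝ) = X - 1 := by simp [hX]; ring
    rw [this, hDn]; field_simp
  have R0 : 0 ≤ ((n + 1 : ℕ) : ℝ) * (y - z) := mul_nonneg (by positivity) (by linarith)
  have m1 := mul_le_mul_of_nonneg_left r1 R0
  have m2 := mul_le_mul_of_nonneg_left r2 R0
  have hyp : 0 ≤ y * binP n y t := by positivity
  have m3 := mul_le_mul_of_nonneg_left h3.le hyp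
  have m4 := mul_le_mul_of_nonneg_left h4.le hyp
  have main : tl n y t - tl (n + 1) z t - (1 - β) * (y * binP n y t)
      = β * (y * binP n y t) - ((n + 1 : ℕ) : ℝ) * (y - z) * binP n u t := by
    have := tl_succ n y t
    linear_combination (-1) * this + hu
  rw [main, abs_le]
  nth_rewrite 2 [R] at m1
  nth_rewrite 1 [R] at m2
  constructor
  · linarith
  · linarith

lemma thr {b β r : ℝ} (hb : 0 < b) (hβ1 : β < 1) (hr : 0 < r) :
    ∃ N : ℕ, ∀ x : ℕ, x < N ↔ b * (x : ℝ) ^ (1 - β) < r := by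
  refine ⟨⌈(r / b) ^ (1 - β)⁻¹⌉₊, fun x => ?_⟩
  have h : 0 < 1 - β := by linarith
  rw [Nat.lt_ceil, Real.lt_rpow_inv_iff_of_pos (by positivity) (by positivity) h, lt_div_iff₀ hb,
    mul_comm]

lemma window {b β : ℝ} (hb : 0 < b) (hβ0 : 0 ≤ β) (hβ1 : β < 1) (hb1 : β = 0 → b < 1)
    {q : ℕ → ℝ} (hq : ∀ x : ℕ, q x = min 1 (b * (x : ℝ) ^ (-β))) {δ : ℝ} (hδ : 0 < δ) (X : ℕ) :
    ∀ᶠ t : ℕ in atTop, ∃ L U : ℕ, X ≤ L ∧ L ≤ U ∧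
      (∀ x ≤ L, ((x - 2 : ℕ) : ℝ) * q x ≤ t / (1 + δ)) ∧
      (∀ x ≥ U, (1 + δ / 2) * t ≤ ((x - 2 : ℕ) : ℝ) * q x) ∧
      (∀ x, L ≤ x → x < U → t / (1 + δ) ≤ b * (x : ℝ) ^ (1 - β) ∧
        b * (x : ℝ) ^ (1 - β) ≤ (1 + δ) * t) := by
  obtain ⟨ev, -⟩ := q_facts hb hβ0 hb1 hq
  obtain ⟨X', hX'⟩ := eventually_atTop.1 ev
  set Y := max (max X X') 2
  have h1 : Tendsto (fun t : ℕ => (t : ℝ) / (1 + δ)) atTop atTop :=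
    tendsto_natCast_atTop_atTop.atTop_div_const (by linarith)
  filter_upwards [h1.eventually_gt_atTop (b * (Y : ℝ) ^ (1 - β)),
    tendsto_natCast_atTop_atTop.eventually_ge_atTop (4 / δ), eventually_gt_atTop 0] with t ht ht2 ht0
  have ht0' : (0:ℝ) < t := by exact_mod_cast ht0
  obtain ⟨L, hL⟩ := thr (r := t / (1 + δ)) hb hβ1 (by positivity)
  obtain ⟨U, hU⟩ := thr (r := (1 + δ) * t) hb hβ1 (by positivity)
  have hYL : Y < L := (hL Y).2 ht
  have hXY : X ≤ Y := by simp [Y]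
  have hXY' : X' ≤ Y := by simp [Y]
  have h2Y : 2 ≤ Y := by simp [Y]
  have hle : (t:ℝ) / (1 + δ) ≤ (1 + δ) * t := by
    rw [div_le_iff₀ (by positivity)]; nlinarith [mul_pos ht0' hδ, mul_pos (mul_pos ht0' hδ) hδ]
  have hLU : L ≤ U := by
    by_contra h
    push Not at h
    exact lt_irrefl U ((hU U).2 (((hL U).1 h).trans_le hle))
  refine ⟨L, U, by omega, hLU, ?_, ?_, ?_⟩
  · intro x hx
    rcases le_or_gt x 2 with h | h
    · have : x - 2 = 0 := by omega
      rw [this]; simp; positivity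
    · obtain ⟨m, rfl⟩ : ∃ m, x = m + 2 := ⟨x - 2, by omega⟩
      have := (hL (m + 1)).1 (by omega)
      refine le_trans ?_ this.le
      have e : m + 2 - 2 = m := rfl
      rw [e]
      have hp : (0:ℝ) < ((m + 1 : ℕ) : ℝ) := by positivity
      have hq' : q (m + 2) ≤ b * ((m + 1 : ℕ) : ℝ) ^ (-β) := by
        rw [hq]; refine (min_le_right _ _).trans ?_
        exact mul_le_mul_of_nonneg_left (Real.rpow_le_rpow_of_nonpos hp
          (by exact_mod_cast Nat.le_succ _) (by linarith)) hb.le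
      calc (m : ℝ) * q (m + 2) ≤ ((m + 1 : ℕ) : ℝ) * (b * ((m + 1 : ℕ) : ℝ) ^ (-β)) := by
            have : (m:ℝ) ≤ ((m + 1 : ℕ) : ℝ) := by exact_mod_cast Nat.le_succ _
            exact (mul_le_mul_of_nonneg_left hq' (by positivity)).trans
              (mul_le_mul_of_nonneg_right this (by positivity))
        _ = _ := by rw [sub_eq_add_neg, Real.rpow_add hp, Real.rpow_one]; ring
  · intro x hx
    have hxU : (1 + δ) * t ≤ b * (x : ℝ) ^ (1 - β) := by
      by_contra h
      push Not at h
      have := (hU x).2 h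
      omega
    obtain ⟨e1, e2, e3⟩ := hX' x (by omega)
    have hp : (0:ℝ) < x := by exact_mod_cast (by omega : 0 < x)
    have : b * (x : ℝ) ^ (1 - β) = x * q x := by
      rw [e1, sub_eq_add_neg, Real.rpow_add hp, Real.rpow_one]; ring
    rw [this] at hxU
    rw [Nat.cast_sub (by omega)]
    rw [div_le_iff₀ hδ] at ht2
    push_cast
    nlinarith
  · intro x h1 h2
    refine ⟨?_, ((hU x).1 h2).le⟩
    by_contra h
    push Not at h
    have := (hL x).2 h
    omega

lemma core {a b α β : ℝ} (ha : 0 < a) (hb : 0 < b)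
    (hα : 2 < α) (hβ0 : 0 ≤ β) (hβ1 : β < 1) (hb1 : β = 0 → b < 1)
    {q : ℕ → ℝ} (hq : ∀ x : ℕ, q x = min 1 (b * (x : ℝ) ^ (-β)))
    (hq0 : ∀ x, 0 ≤ q x) (hq1 : ∀ x, q x ≤ 1)
    {V : ℕ → ℝ} (hV0 : ∀ x, 0 ≤ V x)
    (hV : Tendsto (fun x : ℕ => V x * (x : ℝ) ^ (α - 2)) atTop (𝓝 a))
    (hsum : Summable fun x => V x * q x)
    {δ : ℝ} (hδ : 0 < δ) (hδa : δ < a) (hδβ : δ < 1 - β) :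
    ∀ᶠ t : ℕ in atTop,
      (a - δ) * (b / (1 + δ)) ^ ((α - 2) / (1 - β)) * ((1 - δ) / (1 - β + δ)) ≤
        (∑' x, V x * (q x * binP (x - 2) (q x) t)) * (t : ℝ) ^ ((α - 2) / (1 - β)) ∧
      (∑' x, V x * (q x * binP (x - 2) (q x) t)) * (t : ℝ) ^ ((α - 2) / (1 - β)) ≤
        (a + δ) * (b * (1 + δ)) ^ ((α - 2) / (1 - β)) * (1 / (1 - β - δ)) + δ := by
  set γ := (α - 2) / (1 - β) with hγ
  have h1β : 0 < 1 - β := by linarith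
  have hγ0 : 0 < γ := div_pos (by linarith) h1β
  obtain ⟨c, hc, hc1, hc2⟩ : ∃ c : ℝ, 0 < c ∧ c ≤ (δ / 2) * (1 / (1 + δ / 2) - 1 / (1 + δ)) ∧
      c ≤ (1 - 1 / (1 + δ / 4)) * (δ / 4) := by
    refine ⟨min ((δ / 2) * (1 / (1 + δ / 2) - 1 / (1 + δ))) ((1 - 1 / (1 + δ / 4)) * (δ / 4)),
      lt_min ?_ ?_, min_le_left _ _, min_le_right _ _⟩
    · have : 1 / (1 + δ) < 1 / (1 + δ / 2) := by
        apply one_div_lt_one_div_of_lt <;> linarith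
      exact mul_pos (by linarith) (by linarith)
    · have : 1 / (1 + δ / 4) < 1 := by
        rw [div_lt_one] <;> linarith
      exact mul_pos (by linarith) (by linarith)
  set M := ∑' x, V x * q x with hM
  have hM0 : 0 ≤ M := tsum_nonneg fun x => mul_nonneg (hV0 x) (hq0 x)
  have hE : Tendsto (fun t : ℕ => Real.exp (-c * t)) atTop (𝓝 0) := by
    have : Tendsto (fun t : ℕ => c * (t : ℝ)) atTop atTop :=
      tendsto_natCast_atTop_atTop.const_mul_atTop hc
    have := Real.tendsto_exp_neg_atTop_nhds_zero.comp this
    refine this.congr fun t => ?_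
    simp
  have hEt : Tendsto (fun t : ℕ => Real.exp (-c * t) * M * (t : ℝ) ^ γ) atTop (𝓝 0) := by
    have := ((tendsto_rpow_mul_exp_neg_mul_atTop_nhds_zero γ c hc).comp
      (tendsto_natCast_atTop_atTop (R := ℝ))).mul_const M
    rw [zero_mul] at this
    refine this.congr fun t => ?_
    simp only [Function.comp]; ring
  have evV : ∀ᶠ x : ℕ in atTop, a - δ ≤ V x * (x : ℝ) ^ (α - 2) ∧
      V x * (x : ℝ) ^ (α - 2) ≤ a + δ := by
    filter_upwards [hV.eventually (gt_mem_nhds (show a < a + δ by linarith)),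
      hV.eventually (lt_mem_nhds (show a - δ < a by linarith))] with x h1 h2
    exact ⟨h2.le, h1.le⟩
  obtain ⟨X, hX⟩ := eventually_atTop.1 ((incr (C := 1 + δ) hb hβ0 hb1 hq hδ).and
    (evV.and (eventually_gt_atTop 0)))
  filter_upwards [window hb hβ0 hβ1 hb1 hq hδ X, hE.eventually (gt_mem_nhds (half_pos hδ)),
    hEt.eventually (gt_mem_nhds hδ), eventually_gt_atTop 0] with t ⟨L, U, hXL, hLU, hlo, hhi, hw⟩
    hE1 hE2 ht0
  have ht : (0:ℝ) < t := by exact_mod_cast ht0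
  set E := Real.exp (-c * t) with hEdef
  have hEpos : 0 < E := Real.exp_pos _
  set π : ℕ → ℝ := fun x => q x * binP (x - 2) (q x) t with hπ
  have hπ0 : ∀ x, 0 ≤ π x := fun x => mul_nonneg (hq0 x) (binP_nonneg (hq0 x) (hq1 x))
  have ex1 : ∀ x ≤ L, Real.exp ((1 + δ / 2 - 1) * (((x - 2 : ℕ) : ℝ) * q x - t / (1 + δ / 2)))
      ≤ E := by
    intro x hx
    rw [hEdef]; apply Real.exp_le_exp.2
    have h1 := hlo x hx
    calc _ ≤ (1 + δ / 2 - 1) * (t / (1 + δ) - t / (1 + δ / 2)) := by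
          apply mul_le_mul_of_nonneg_left _ (by linarith); linarith
      _ = -((δ / 2) * (1 / (1 + δ / 2) - 1 / (1 + δ))) * t := by ring
      _ ≤ _ := by apply mul_le_mul_of_nonneg_right _ ht.le; linarith
  have ex2 : ∀ x ≥ U, Real.exp ((1 / (1 + δ / 4) - 1) *
      (((x - 2 : ℕ) : ℝ) * q x - t / (1 / (1 + δ / 4)))) ≤ E := by
    intro x hx
    rw [hEdef]; apply Real.exp_le_exp.2
    have h1 := hhi x hx
    have h2 : 1 / (1 + δ / 4) ≤ 1 := by rw [div_le_one] <;> linarith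
    calc _ ≤ (1 / (1 + δ / 4) - 1) * ((δ / 4) * t) := by
          apply mul_le_mul_of_nonpos_left _ (by linarith)
          rw [div_div_eq_mul_div, div_one]; linarith
      _ = -((1 - 1 / (1 + δ / 4)) * (δ / 4)) * t := by ring
      _ ≤ _ := by apply mul_le_mul_of_nonneg_right _ ht.le; linarith
  have bL : ∀ x ≤ L, binP (x - 2) (q x) t ≤ E := fun x hx =>
    (cher_pmf (hq0 x) (hq1 x) (by linarith)).trans (ex1 x hx)
  have bU : ∀ x ≥ U, binP (x - 2) (q x) t ≤ E := fun x hx =>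
    (cher_pmf (hq0 x) (hq1 x) (by positivity)).trans (ex2 x hx)
  have tL : 1 - tl (L - 2) (q L) t ≤ E :=
    (cher_hi (hq0 L) (hq1 L) (by linarith)).trans (ex1 L le_rfl)
  have tU : tl (U - 2) (q U) t ≤ E :=
    (cher_lo (hq0 U) (hq1 U) (by positivity) (by rw [div_le_one] <;> linarith)).trans
      (ex2 U le_rfl)
  set H : ℕ → ℝ := fun x => tl (x - 2) (q x) t with hH
  have tele : ∑ x ∈ Finset.Ico L U, (H x - H (x + 1)) = H L - H U := by
    have := Finset.sum_Ico_sub H hLU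
    rw [← neg_inj, ← Finset.sum_neg_distrib]
    simp only [neg_sub]
    exact this
  have inc : ∀ x ∈ Finset.Ico L U, |H x - H (x + 1) - (1 - β) * π x| ≤ δ * π x := by
    intro x hx
    rw [Finset.mem_Ico] at hx
    refine (hX x (by omega)).1 t ?_
    have := (hw x hx.1 hx.2).1
    rw [div_le_iff₀ (by linarith)] at this
    linarith
  set Q := ∑ x ∈ Finset.Ico L U, π x with hQ
  have Q0 : 0 ≤ Q := Finset.sum_nonneg fun x _ => hπ0 x
  have Q1 : (1 - β - δ) * Q ≤ 1 := by
    have : (1 - β - δ) * Q ≤ H L - H U := by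
      rw [← tele, hQ, Finset.mul_sum]
      refine Finset.sum_le_sum fun x hx => ?_
      have := (abs_le.1 (inc x hx)).1
      linarith
    have a1 : H L ≤ 1 := tl_le_one (hq0 L) (hq1 L)
    have a2 : 0 ≤ H U := tl_nonneg (hq0 U) (hq1 U)
    linarith
  have Q2 : 1 - δ ≤ (1 - β + δ) * Q := by
    have : H L - H U ≤ (1 - β + δ) * Q := by
      rw [← tele, hQ, Finset.mul_sum]
      refine Finset.sum_le_sum fun x hx => ?_
      have := (abs_le.1 (inc x hx)).2
      linarith
    have a1 : 1 - H L ≤ E := tL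
    have a2 : H U ≤ E := tU
    linarith
  have Q1' : Q ≤ 1 / (1 - β - δ) := by
    rw [le_div_iff₀ (by linarith)]; linarith
  have Q2' : (1 - δ) / (1 - β + δ) ≤ Q := by
    rw [div_le_iff₀ (by linarith)]; linarith
  have Vb : ∀ x ∈ Finset.Ico L U, (a - δ) * (b / (1 + δ)) ^ γ ≤ V x * (t : ℝ) ^ γ ∧
      V x * (t : ℝ) ^ γ ≤ (a + δ) * (b * (1 + δ)) ^ γ := by
    intro x hx
    rw [Finset.mem_Ico] at hx
    obtain ⟨-, ⟨v1, v2⟩, hx0⟩ := hX x (by omega)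
    have hxp : (0:ℝ) < x := by exact_mod_cast hx0
    obtain ⟨w1, w2⟩ := hw x hx.1 hx.2
    have hpp : 0 < (x : ℝ) ^ (1 - β) := Real.rpow_pos_of_pos hxp _
    have key : V x * (t : ℝ) ^ γ = V x * (x : ℝ) ^ (α - 2) * (t / (x : ℝ) ^ (1 - β)) ^ γ := by
      rw [Real.div_rpow ht.le hpp.le, ← Real.rpow_mul hxp.le]
      have : (1 - β) * γ = α - 2 := by rw [hγ]; field_simp
      rw [this]
      have := (Real.rpow_pos_of_pos hxp (α - 2)).ne'
      field_simp
    rw [key]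
    constructor
    · apply mul_le_mul v1 _ (by positivity) (by linarith)
      apply Real.rpow_le_rpow (by positivity) _ hγ0.le
      rw [div_le_div_iff₀ (by linarith) hpp]; linarith
    · apply mul_le_mul v2 _ (by positivity) (by linarith)
      apply Real.rpow_le_rpow (by positivity) _ hγ0.le
      rw [div_le_iff₀ (by linarith)] at w1
      rw [div_le_iff₀ hpp]; linarith
  have hbin1 : ∀ x, binP (x - 2) (q x) t ≤ 1 := fun x =>
    le_hasSum (hasSum_binP_one _ _) t fun k _ => binP_nonneg (hq0 x) (hq1 x)
  have sm : Summable fun x => V x * π x := by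
    refine Summable.of_nonneg_of_le (fun x => mul_nonneg (hV0 x) (hπ0 x)) (fun x => ?_) hsum
    apply mul_le_mul_of_nonneg_left _ (hV0 x)
    exact mul_le_of_le_one_right (hq0 x) (hbin1 x)
  set W := ∑ x ∈ Finset.Ico L U, V x * π x with hW
  have htγ : 0 < (t : ℝ) ^ γ := Real.rpow_pos_of_pos ht _
  have W1 : (a - δ) * (b / (1 + δ)) ^ γ * Q ≤ W * (t : ℝ) ^ γ := by
    rw [hW, hQ, Finset.mul_sum, Finset.sum_mul]
    refine Finset.sum_le_sum fun x hx => ?_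
    have := mul_le_mul_of_nonneg_right (Vb x hx).1 (hπ0 x)
    linarith
  have W2 : W * (t : ℝ) ^ γ ≤ (a + δ) * (b * (1 + δ)) ^ γ * Q := by
    rw [hW, hQ, Finset.mul_sum, Finset.sum_mul]
    refine Finset.sum_le_sum fun x hx => ?_
    have := mul_le_mul_of_nonneg_right (Vb x hx).2 (hπ0 x)
    linarith
  have S1 : W ≤ ∑' x, V x * π x :=
    sm.sum_le_tsum _ fun x _ => mul_nonneg (hV0 x) (hπ0 x)
  have S2 : ∑' x, V x * π x ≤ W + E * M := by
    have hs : HasSum (fun x => (if x ∈ Finset.Ico L U then V x * π x else 0) + E * (V x * q x))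
        (W + E * M) := by
      refine HasSum.add ?_ (hsum.hasSum.mul_left E)
      have := hasSum_sum_of_ne_finset_zero (f := fun x => if x ∈ Finset.Ico L U then V x * π x else 0)
        (s := Finset.Ico L U) (L := SummationFilter.unconditional ℕ) (fun x hx => if_neg hx)
      convert this using 1
      exact Finset.sum_congr rfl fun x hx => (if_pos hx).symm
    refine hasSum_le (fun x => ?_) sm.hasSum hs
    have n1 : 0 ≤ V x * q x := mul_nonneg (hV0 x) (hq0 x)
    have n2 : 0 ≤ E * (V x * q x) := mul_nonneg hEpos.le n1
    split_ifs with h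
    · linarith
    · have hb : binP (x - 2) (q x) t ≤ E := by
        rw [Finset.mem_Ico] at h
        rcases le_or_gt x L with h' | h'
        · exact bL x h'
        · exact bU x (by omega)
      have := mul_le_mul_of_nonneg_left hb n1
      simp only [hπ]; linarith
  constructor
  · calc _ ≤ (a - δ) * (b / (1 + δ)) ^ γ * Q := by
          apply mul_le_mul_of_nonneg_left Q2'
          exact mul_nonneg (by linarith) (by positivity)
      _ ≤ W * (t : ℝ) ^ γ := W1
      _ ≤ _ := mul_le_mul_of_nonneg_right S1 htγ.le
  · calc _ ≤ (W + E * M) * (t : ℝ) ^ γ := mul_le_mul_of_nonneg_right S2 htγ.le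
      _ = W * (t : ℝ) ^ γ + E * M * (t : ℝ) ^ γ := by ring
      _ ≤ (a + δ) * (b * (1 + δ)) ^ γ * Q + δ := add_le_add W2 hE2.le
      _ ≤ _ := by
          gcongr

lemma core_lim {a b α β : ℝ} (ha : 0 < a) (hb : 0 < b)
    (hα : 2 < α) (hβ0 : 0 ≤ β) (hβ1 : β < 1) (hb1 : β = 0 → b < 1)
    {q : ℕ → ℝ} (hq : ∀ x : ℕ, q x = min 1 (b * (x : ℝ) ^ (-β)))
    (hq0 : ∀ x, 0 ≤ q x) (hq1 : ∀ x, q x ≤ 1)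
    {V : ℕ → ℝ} (hV0 : ∀ x, 0 ≤ V x)
    (hV : Tendsto (fun x : ℕ => V x * (x : ℝ) ^ (α - 2)) atTop (𝓝 a))
    (hsum : Summable fun x => V x * q x) :
    Tendsto (fun t : ℕ => (∑' x, V x * (q x * binP (x - 2) (q x) t)) *
      (t : ℝ) ^ ((α - 2) / (1 - β))) atTop (𝓝 (a * b ^ ((α - 2) / (1 - β)) * (1 - β)⁻¹)) := by
  have hc := fun δ h1 h2 h3 => core ha hb hα hβ0 hβ1 hb1 hq hq0 hq1 hV0 hV hsum (δ := δ) h1 h2 h3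
  set γ := (α - 2) / (1 - β) with hγ
  have h1β : 0 < 1 - β := by linarith
  have hγ0 : 0 < γ := div_pos (by linarith) h1β
  have c1 : ContinuousAt (fun δ : ℝ => (a - δ) * (b / (1 + δ)) ^ γ * ((1 - δ) / (1 - β + δ))) 0 := by
    refine ((continuousAt_const.sub continuousAt_id).mul (ContinuousAt.rpow_const ?_
      (Or.inr hγ0.le))).mul (ContinuousAt.div ?_ ?_ ?_)
    · exact ContinuousAt.div continuousAt_const (by fun_prop) (by norm_num)
    · fun_prop
    · fun_prop
    · simp; linarith
  have c2 : ContinuousAt (fun δ : ℝ => (a + δ) * (b * (1 + δ)) ^ γ * (1 / (1 - β - δ)) + δ) 0 := by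
    refine (((continuousAt_const.add continuousAt_id).mul (ContinuousAt.rpow_const ?_
      (Or.inr hγ0.le))).mul (ContinuousAt.div ?_ ?_ ?_)).add continuousAt_id
    · fun_prop
    · fun_prop
    · fun_prop
    · simp; linarith
  have l1 : Tendsto (fun δ : ℝ => (a - δ) * (b / (1 + δ)) ^ γ * ((1 - δ) / (1 - β + δ)))
      (𝓝[>] 0) (𝓝 (a * b ^ γ * (1 - β)⁻¹)) := by
    have := c1.tendsto.mono_left (nhdsWithin_le_nhds (s := Set.Ioi 0))
    simpa using this
  have l2 : Tendsto (fun δ : ℝ => (a + δ) * (b * (1 + δ)) ^ γ * (1 / (1 - β - δ)) + δ)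
      (𝓝[>] 0) (𝓝 (a * b ^ γ * (1 - β)⁻¹)) := by
    have := c2.tendsto.mono_left (nhdsWithin_le_nhds (s := Set.Ioi 0))
    simpa using this
  have evδ : ∀ᶠ δ : ℝ in 𝓝[>] 0, 0 < δ ∧ δ < a ∧ δ < 1 - β := by
    filter_upwards [self_mem_nhdsWithin, nhdsWithin_le_nhds (gt_mem_nhds ha),
      nhdsWithin_le_nhds (gt_mem_nhds h1β)] with δ h1 h2 h3
    exact ⟨h1, h2, h3⟩
  rw [tendsto_order]
  constructor
  · intro r hr
    obtain ⟨δ, ⟨h1, h2, h3⟩, h4⟩ := (evδ.and (l1.eventually (lt_mem_nhds hr))).exists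
    filter_upwards [hc δ h1 h2 h3] with t ht
    exact h4.trans_le ht.1
  · intro r hr
    obtain ⟨δ, ⟨h1, h2, h3⟩, h4⟩ := (evδ.and (l2.eventually (gt_mem_nhds hr))).exists
    filter_upwards [hc δ h1 h2 h3] with t ht
    exact ht.2.trans_lt h4

lemma fub {q w : ℕ → ℝ} (hq0 : ∀ x, 0 ≤ q x) (hq1 : ∀ x, q x ≤ 1) (hw : ∀ x, 0 ≤ w x)
    (hs : Summable w) (t : ℕ) :
    ∑' u : ℕ, ∑' x : ℕ, w x * binP (x - 2) (q x) t * binP (x - 2) (q x) u =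
      ∑' x : ℕ, w x * binP (x - 2) (q x) t := by
  have h1 : ∀ x, HasSum (fun u => w x * binP (x - 2) (q x) t * binP (x - 2) (q x) u)
      (w x * binP (x - 2) (q x) t) := fun x => by
    simpa using (hasSum_binP_one (x - 2) (q x)).mul_left (w x * binP (x - 2) (q x) t)
  have hb : ∀ x u, 0 ≤ binP (x - 2) (q x) u := fun x u => binP_nonneg (hq0 x) (hq1 x)
  have hs2 : Summable fun x => w x * binP (x - 2) (q x) t := by
    refine Summable.of_nonneg_of_le (fun x => mul_nonneg (hw x) (hb x t)) (fun x => ?_) hs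
    exact mul_le_of_le_one_right (hw x) (le_hasSum (hasSum_binP_one _ _) t fun k _ => hb x k)
  have hs3 : Summable (Function.uncurry fun x u : ℕ =>
      w x * binP (x - 2) (q x) t * binP (x - 2) (q x) u) := by
    refine (summable_prod_of_nonneg ?_).2 ⟨fun x => (h1 x).summable, ?_⟩
    · rintro ⟨x, u⟩
      exact mul_nonneg (mul_nonneg (hw x) (hb x t)) (hb x u)
    · refine hs2.congr fun x => ?_
      exact ((h1 x).tsum_eq).symm
  rw [hs3.tsum_comm]
  exact tsum_congr fun x => (h1 x).tsum_eq

/-- **Tail of `D₁'` (eq. (eq:D1primeasymp) in the paper)**. Under the power-law layer type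
distribution, the first marginal of `f₂'` (a mixed binomial law, `Bin(X'-2, q(X'))` given
`X'`, where `P(X' = x) = (x)₂ q(x) p(x)/P₂₁`) satisfies
`P(D₁' = t) = (c' + o(1)) t^{-(α-2)/(1-β)}` with `c' = a b^{(α-2)/(1-β)} (1-β)⁻¹ P₂₁⁻¹`. -/
theorem f2p_marginal_tail
    (a b α β : ℝ) (ha : 0 < a) (hb : 0 < b)
    (hα : 2 < α) (hβ0 : 0 ≤ β) (hβ1 : β < 1) (hαβ : 3 < α + β)
    (hb1 : β = 0 → b < 1)
    (p : ℕ → ℝ) (hpnn : ∀ x, 0 ≤ p x) (hpsum : HasSum p 1)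
    (hptail : Tendsto (fun x : ℕ => p x * (x : ℝ) ^ α) atTop (𝓝 a))
    (q : ℕ → ℝ) (hq : ∀ x : ℕ, q x = min 1 (b * (x : ℝ) ^ (-β))) :
    Tendsto (fun t : ℕ => (∑' u : ℕ, f2p p q t u) * (t : ℝ) ^ ((α - 2) / (1 - β)))
      atTop (𝓝 (a * b ^ ((α - 2) / (1 - β)) * (1 - β)⁻¹ * (mom p q 2 1)⁻¹)) := by
  have hq0 : ∀ x, 0 ≤ q x := fun x => by
    rw [hq]; exact le_min zero_le_one (by positivity)
  have hq1 : ∀ x, q x ≤ 1 := fun x => by rw [hq]; exact min_le_left _ _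
  set V : ℕ → ℝ := fun x => (x.descFactorial 2 : ℝ) * p x with hVdef
  have hV0 : ∀ x, 0 ≤ V x := fun x => mul_nonneg (by positivity) (hpnn x)
  have hV : Tendsto (fun x : ℕ => V x * (x : ℝ) ^ (α - 2)) atTop (𝓝 a) := by
    have h1 : Tendsto (fun x : ℕ => 1 - (x : ℝ)⁻¹) atTop (𝓝 1) := by
      simpa using (tendsto_inv_atTop_nhds_zero_nat (𝕜 := ℝ)).const_sub 1
    have := h1.mul hptail
    rw [one_mul] at this
    refine this.congr' ?_
    filter_upwards [eventually_ge_atTop 2] with x hx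
    obtain ⟨n, rfl⟩ : ∃ n, x = n + 2 := ⟨x - 2, by omega⟩
    have hp : (0:ℝ) < ((n + 2 : ℕ) : ℝ) := by positivity
    have e : (((n + 2).descFactorial 2 : ℕ) : ℝ) = ((n + 2 : ℕ) : ℝ) * (((n + 2 : ℕ) : ℝ) - 1) := by
      simp [Nat.descFactorial]; ring
    simp only [hVdef]
    rw [e, Real.rpow_sub hp, Real.rpow_two]
    field_simp
  have hsum : Summable fun x => V x * q x := by
    have hr : Summable fun x : ℕ => (x : ℝ) ^ (2 - α - β) :=
      Real.summable_nat_rpow.2 (by linarith)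
    refine summable_of_isBigO_nat hr ?_
    refine Asymptotics.IsBigO.of_bound ((a + 1) * b) ?_
    filter_upwards [hV.eventually (gt_mem_nhds (show a < a + 1 by linarith)),
      eventually_gt_atTop 0] with x h1 hx
    have hp : (0:ℝ) < (x : ℝ) := by exact_mod_cast hx
    rw [Real.norm_of_nonneg (mul_nonneg (hV0 x) (hq0 x)), Real.norm_of_nonneg (by positivity)]
    have h2 : V x ≤ (a + 1) * (x : ℝ) ^ (2 - α) := by
      have : (x : ℝ) ^ (2 - α) = ((x : ℝ) ^ (α - 2))⁻¹ := by
        rw [← Real.rpow_neg hp.le]; ring_nf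
      rw [this, ← div_eq_mul_inv, le_div_iff₀ (by positivity)]
      exact h1.le
    have h3 : q x ≤ b * (x : ℝ) ^ (-β) := by rw [hq]; exact min_le_right _ _
    calc V x * q x ≤ ((a + 1) * (x : ℝ) ^ (2 - α)) * (b * (x : ℝ) ^ (-β)) :=
          mul_le_mul h2 h3 (hq0 x) (by positivity)
      _ = _ := by rw [sub_eq_add_neg (2 - α), Real.rpow_add hp]; ring
  have main := (core_lim ha hb hα hβ0 hβ1 hb1 hq hq0 hq1 hV0 hV hsum).mul_const (mom p q 2 1)⁻¹
  refine main.congr fun t => ?_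
  have hf := fub hq0 hq1 (fun x => mul_nonneg (hV0 x) (hq0 x)) hsum t
  have e : ∑' u : ℕ, f2p p q t u =
      (∑' x, V x * (q x * binP (x - 2) (q x) t)) * (mom p q 2 1)⁻¹ := by
    simp only [f2p, div_eq_mul_inv]
    rw [tsum_mul_right]
    congr 1
    have e1 : ∑' x, V x * (q x * binP (x - 2) (q x) t) =
        ∑' x, V x * q x * binP (x - 2) (q x) t := tsum_congr fun x => by ring
    rw [e1, ← hf]
    refine tsum_congr fun u => tsum_congr fun x => ?_
    simp only [hVdef]; ring
  rw [e]; ring
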